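/- Let B_w be a bounded bilateral weighted backward shift on ℓ^p(ℤ), 1 ≤ p < ∞. If there exist x ∈ ℓ^p(ℤ) and nonzero y ∈ ℓ^p(ℤ) such that for every ε > 0 the set {n ≥ 0 : ‖B_w^n x − y‖ < ε} has positive upper Banach density, then ∑_{n≥1} 1/|w₀w₁⋯wₙ|^p < ∞ and ∑_{n<0} |wₙw_{n+1}⋯w₀|^p < ∞ (equivalently, B_w is chaotic). -/

import Mathlib

def PosUpperBanachDensity (A : Set ℕ) : Prop :=
  ∃ δ : ℝ, 0 < δ ∧ ∀ N : ℕ, 0 < N → ∃ m : ℕ, δ * N ≤ (A ∩ Set.Ioc m (m + N)).ncard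

/-! Let `A` be the set of times at which the orbit of `x` is close to `y`. Averaging over long
intervals in which `A` is dense and passing to a limit along an ultrafilter gives an invariant mean
on `ℤ` charging `A`. By Khintchine's recurrence theorem the set `S` of `d` for which the mean of
`A ∩ (A - d)` is at least a suitable `η > 0` has bounded gaps.

Let `W` be the cumulative weight, so that `W 0 = 1` and `W (k + 1) = w (k + 1) * W k`, and let
`y j ≠ 0`. If `n` and `n + d` both lie in `A`, then
`(B_w^n x) (d + j) = W j / W (d + j) * (B_w^(n + d) x) j`, where the last factor is bounded below.
Hence, for each `n ∈ A`, the sum of `1 / |W (d + j)|^p` over all `d` with `n + d ∈ A` is at most a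
constant times `‖B_w^n x‖^p`, which is bounded on `A`. Averaging over `n ∈ A` bounds the sum over
`d ∈ S`, and since the weights are bounded and `S` has bounded gaps, `1 / |W|^p` is summable over
all of `ℤ`. -/

open Filter Topology
open scoped BoundedContinuousFunction

section InvariantMean

variable {G : Type*} [AddGroup G] [TopologicalSpace G] [ContinuousAdd G]

/-- The right translate `x ↦ f (x + d)` of a bounded continuous function on an additive group. -/
def rightTranslate (d : G) (f : G →ᵇ ℝ) : G →ᵇ ℝ :=
  f.compContinuous (.addRight d)

@[simp]
lemma rightTranslate_apply (d : G) (f : G →ᵇ ℝ) (x : G) : rightTranslate d f x = f (x + d) :=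
  rfl

lemma rightTranslate_add (d e : G) (f : G →ᵇ ℝ) :
    rightTranslate (d + e) f = rightTranslate d (rightTranslate e f) := by
  ext x
  simp [add_assoc]

/-- A right-invariant mean: a normalized positive functional on the bounded continuous functions
on an additive group, unchanged by right translations. -/
structure IsInvariantMean (L : (G →ᵇ ℝ) →ₚ[ℝ] ℝ) : Prop where
  map_one : L 1 = 1
  map_rightTranslate (d : G) (f : G →ᵇ ℝ) : L (rightTranslate d f) = L f

/-- The autocorrelation `d ↦ L (x ↦ f x * f (x + d))` of `f` with respect to a mean `L`. For the
indicator function of a set `A` it measures `A ∩ (A - d)`. -/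
def correlation (L : (G →ᵇ ℝ) →ₚ[ℝ] ℝ) (f : G →ᵇ ℝ) (d : G) : ℝ :=
  L (f * rightTranslate d f)

variable {L : (G →ᵇ ℝ) →ₚ[ℝ] ℝ} {f : G →ᵇ ℝ}

lemma correlation_nonneg (hf : 0 ≤ f) (d : G) : 0 ≤ correlation L f d :=
  L.map_nonneg fun x => mul_nonneg (hf x) (hf (x + d))

namespace IsInvariantMean

lemma map_rightTranslate_mul_rightTranslate (hL : IsInvariantMean L) (f : G →ᵇ ℝ) (d e : G) :
    L (rightTranslate d f * rightTranslate e f) = correlation L f (-e + d) := by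
  have h : rightTranslate d f * rightTranslate e f =
      rightTranslate e (f * rightTranslate (-e + d) f) := by
    ext x
    simp [add_assoc, mul_comm]
  rw [h, hL.map_rightTranslate, correlation]

lemma correlation_neg_add_comm (hL : IsInvariantMean L) (f : G →ᵇ ℝ) (d e : G) :
    correlation L f (-d + e) = correlation L f (-e + d) := by
  rw [← hL.map_rightTranslate_mul_rightTranslate, mul_comm,
    hL.map_rightTranslate_mul_rightTranslate]

lemma sq_map_le_map_mul_self (hL : IsInvariantMean L) (f : G →ᵇ ℝ) : L f ^ 2 ≤ L (f * f) := by
  have h_nonneg : 0 ≤ L ((f - L f • 1) * (f - L f • 1)) := L.map_nonneg fun x => mul_self_nonneg _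
  have h_expand : (f - L f • 1) * (f - L f • 1) = f * f - (2 * L f) • f + (L f ^ 2) • 1 := by
    ext x
    simp
    ring
  rw [h_expand, map_add, map_sub, map_smul, map_smul, hL.map_one] at h_nonneg
  simp only [smul_eq_mul] at h_nonneg
  linarith

lemma sq_card_mul_map_le_sum_correlation (hL : IsInvariantMean L) (f : G →ᵇ ℝ) {ι : Type*}
    (s : Finset ι) (d : ι → G) :
    (s.card * L f) ^ 2 ≤ ∑ i ∈ s, ∑ j ∈ s, correlation L f (-d j + d i) := by
  have h_map : L (∑ i ∈ s, rightTranslate (d i) f) = s.card * L f := by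
    simp [hL.map_rightTranslate]
  have h_sq := hL.sq_map_le_map_mul_self (∑ i ∈ s, rightTranslate (d i) f)
  simpa only [h_map, Finset.sum_mul_sum, map_sum, hL.map_rightTranslate_mul_rightTranslate]
    using h_sq

/-- Khintchine's recurrence theorem. If it failed, a greedy choice would give arbitrarily many
translates of `f` with pairwise correlations below `η`, against
`sq_card_mul_map_le_sum_correlation`. -/
theorem exists_finset_forall_le_correlation (hL : IsInvariantMean L) {η : ℝ}
    (hη : η < L f ^ 2) : ∃ T : Finset G, ∀ d, ∃ t ∈ T, η ≤ correlation L f (-t + d) := by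
  by_contra! h_fail
  let r : G → G → Prop := fun t d => correlation L f (-t + d) < η
  have : Std.Symm r := ⟨fun t d h => (hL.correlation_neg_add_comm f d t).trans_lt h⟩
  obtain ⟨d, -, hd⟩ := exists_seq_of_forall_finset_exists' (fun _ => True) r
    fun T _ => (h_fail T).imp fun _ h => ⟨trivial, h⟩
  set c₀ := correlation L f 0
  obtain ⟨N, hN⟩ := exists_nat_gt (max 0 ((c₀ - η) / (L f ^ 2 - η)))
  obtain ⟨hN_pos, hN⟩ := max_lt_iff.1 hN
  have h_le (i j : ℕ) : correlation L f (-d j + d i) ≤ η + if i = j then c₀ - η else 0 := by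
    split_ifs with hij
    · simp [hij, c₀]
    · simpa using (hd (Ne.symm hij)).le
  have h_sum : (N * L f) ^ 2 ≤ N * (N * η + (c₀ - η)) := calc
    (N * L f) ^ 2 ≤ ∑ i ∈ Finset.range N, ∑ j ∈ Finset.range N, correlation L f (-d j + d i) := by
      simpa using hL.sq_card_mul_map_le_sum_correlation f (Finset.range N) d
    _ ≤ ∑ i ∈ Finset.range N, ∑ j ∈ Finset.range N, (η + if i = j then c₀ - η else 0) :=
      Finset.sum_le_sum fun i _ => Finset.sum_le_sum fun j _ => h_le i j
    _ = ∑ _i ∈ Finset.range N, (N * η + (c₀ - η)) :=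
      Finset.sum_congr rfl fun i hi => by
        rw [Finset.sum_add_distrib, Finset.sum_ite_eq, if_pos hi]
        simp
    _ = N * (N * η + (c₀ - η)) := by rw [Finset.sum_const, Finset.card_range, nsmul_eq_mul]
  rw [div_lt_iff₀ (sub_pos.2 hη)] at hN
  nlinarith

lemma sum_mul_correlation_le (hL : IsInvariantMean L) {v : G → ℝ} {M : ℝ} {F : Finset G}
    (hM : ∀ x, f x * ∑ d ∈ F, v d * f (x + d) ≤ M) : ∑ d ∈ F, v d * correlation L f d ≤ M := by
  have h_le : ∑ d ∈ F, v d • (f * rightTranslate d f) ≤ M • 1 := fun x => by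
    simpa [Finset.mul_sum, mul_left_comm] using hM x
  simpa [correlation, hL.map_one] using L.monotone' h_le

lemma summable_indicator_le_correlation (hL : IsInvariantMean L) (hf : 0 ≤ f) {η : ℝ} (hη : 0 < η)
    {v : G → ℝ} (hv : ∀ d, 0 ≤ v d) {M : ℝ}
    (hM : ∀ x (F : Finset G), f x * ∑ d ∈ F, v d * f (x + d) ≤ M) :
    Summable ({d | η ≤ correlation L f d}.indicator v) := by
  have h_summable : Summable fun d => v d * correlation L f d :=
    summable_of_sum_le (fun d => mul_nonneg (hv d) (correlation_nonneg hf d))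
      fun F => hL.sum_mul_correlation_le (hM · F)
  refine (h_summable.mul_left η⁻¹).of_nonneg_of_le
    (fun d => Set.indicator_nonneg (fun d _ => hv d) d) fun d => ?_
  rw [le_inv_mul_iff₀ hη, mul_comm]
  simp only [Set.indicator_apply, Set.mem_ofPred_eq]
  split_ifs with hd
  · exact mul_le_mul_of_nonneg_left hd (hv d)
  · simpa using mul_nonneg (hv d) (correlation_nonneg hf d)

end IsInvariantMean

end InvariantMean

section IntervalAverage

/-- The average of `f` over the `N` integers `m, …, m + N - 1`; it is `0` when `N = 0`. -/
noncomputable def intervalAverage (m : ℤ) (N : ℕ) : (ℤ →ᵇ ℝ) →ₚ[ℝ] ℝ :=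
  .mk₀
    { toFun := fun f => (N : ℝ)⁻¹ * ∑ i ∈ Finset.range N, f (m + i)
      map_add' := fun f g => by simp [Finset.sum_add_distrib, mul_add]
      map_smul' := fun c f => by simp [← Finset.mul_sum, mul_left_comm] }
    fun f hf => mul_nonneg (by positivity) (Finset.sum_nonneg fun i _ => hf (m + i))

lemma intervalAverage_apply (m : ℤ) (N : ℕ) (f : ℤ →ᵇ ℝ) :
    intervalAverage m N f = (N : ℝ)⁻¹ * ∑ i ∈ Finset.range N, f (m + i) :=
  rfl

lemma intervalAverage_one (m : ℤ) {N : ℕ} (hN : N ≠ 0) : intervalAverage m N 1 = 1 := by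
  simp [intervalAverage_apply, hN]

lemma abs_intervalAverage_le (m : ℤ) (N : ℕ) (f : ℤ →ᵇ ℝ) : |intervalAverage m N f| ≤ ‖f‖ := by
  have h_sum : |∑ i ∈ Finset.range N, f (m + i)| ≤ N * ‖f‖ := by
    simpa using norm_sum_le_of_le (Finset.range N) fun i _ => f.norm_coe_le_norm (m + i)
  rw [intervalAverage_apply, abs_mul, abs_of_nonneg (by positivity : (0 : ℝ) ≤ (N : ℝ)⁻¹)]
  exact inv_mul_le_of_le_mul₀ (by positivity) (norm_nonneg f) h_sum

lemma intervalAverage_rightTranslate_one_sub (m : ℤ) (N : ℕ) (f : ℤ →ᵇ ℝ) :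
    intervalAverage m N (rightTranslate 1 f) - intervalAverage m N f =
      (N : ℝ)⁻¹ * (f (m + N) - f m) := by
  have h_telescope := Finset.sum_range_sub (fun i : ℕ => f (m + i)) N
  simp only [Nat.cast_add, Nat.cast_one, Nat.cast_zero, add_zero, ← add_assoc] at h_telescope
  rw [intervalAverage_apply, intervalAverage_apply, ← mul_sub, ← Finset.sum_sub_distrib,
    ← h_telescope]
  rfl

lemma tendsto_intervalAverage_rightTranslate_one_sub (m : ℕ → ℤ) (f : ℤ →ᵇ ℝ) :
    Tendsto (fun N => intervalAverage (m N) N (rightTranslate 1 f) - intervalAverage (m N) N f)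
      atTop (𝓝 0) := by
  simp only [intervalAverage_rightTranslate_one_sub]
  refine (tendsto_inv_atTop_nhds_zero_nat (𝕜 := ℝ)).zero_mul_isBoundedUnder_le
    (isBoundedUnder_of ⟨2 * ‖f‖, fun N => ?_⟩)
  simpa [Real.dist_eq] using f.dist_le_two_norm (m N + N) (m N)

lemma exists_positiveLinearMap_tendsto {ι E : Type*} [AddCommGroup E] [PartialOrder E]
    [IsOrderedAddMonoid E] [Module ℝ E] (U : Ultrafilter ι) {Λ : ι → E →ₚ[ℝ] ℝ}
    (hΛ : ∀ f, ∃ C, ∀ i, |Λ i f| ≤ C) :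
    ∃ L : E →ₚ[ℝ] ℝ, ∀ f, Tendsto (fun i => Λ i f) U (𝓝 (L f)) := by
  have h_lim (f : E) : ∃ l, Tendsto (fun i => Λ i f) U (𝓝 l) := by
    obtain ⟨C, hC⟩ := hΛ f
    obtain ⟨l, -, hl⟩ := (isCompact_Icc (a := -C) (b := C)).ultrafilter_le_nhds
      (U.map fun i => Λ i f) (tendsto_principal.2 (.of_forall fun i => abs_le.1 (hC i)))
    exact ⟨l, hl⟩
  choose L hL using h_lim
  refine ⟨.mk₀ { toFun := L, map_add' := fun f g => ?_, map_smul' := fun c f => ?_ }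
    fun f hf => ge_of_tendsto' (hL f) fun i => (Λ i).map_nonneg hf, hL⟩
  · refine tendsto_nhds_unique (hL (f + g)) ?_
    simpa only [map_add] using (hL f).add (hL g)
  · refine tendsto_nhds_unique (hL (c • f)) ?_
    simpa only [map_smul, RingHom.id_apply] using (hL f).const_smul c

lemma isInvariantMean_of_map_rightTranslate_one {L : (ℤ →ᵇ ℝ) →ₚ[ℝ] ℝ} (h_one : L 1 = 1)
    (h_translate : ∀ f, L (rightTranslate 1 f) = L f) : IsInvariantMean L := by
  refine ⟨h_one, fun d => ?_⟩
  induction d with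
  | zero => exact fun f => congrArg L (by ext; simp)
  | succ n ih => exact fun f => by rw [rightTranslate_add, ih, h_translate]
  | pred n ih =>
    intro f
    rw [← ih f, ← h_translate, ← rightTranslate_add, add_sub_cancel]

theorem exists_isInvariantMean_tendsto_intervalAverage (m : ℕ → ℤ) :
    ∃ L : (ℤ →ᵇ ℝ) →ₚ[ℝ] ℝ, IsInvariantMean L ∧
      ∀ f, Tendsto (fun N => intervalAverage (m N) N f) (hyperfilter ℕ) (𝓝 (L f)) := by
  obtain ⟨L, hL⟩ := exists_positiveLinearMap_tendsto (hyperfilter ℕ)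
    (Λ := fun N => intervalAverage (m N) N)
    fun f => ⟨‖f‖, fun N => abs_intervalAverage_le (m N) N f⟩
  refine ⟨L, isInvariantMean_of_map_rightTranslate_one ?_ fun f => ?_, hL⟩
  · refine tendsto_nhds_unique_of_eventuallyEq (hL 1) tendsto_const_nhds ?_
    filter_upwards [Nat.hyperfilter_le_atTop (eventually_ne_atTop 0)] with N hN
    exact intervalAverage_one (m N) hN
  · refine sub_eq_zero.1 (tendsto_nhds_unique ((hL _).sub (hL f)) ?_)
    exact (tendsto_intervalAverage_rightTranslate_one_sub m f).mono_left Nat.hyperfilter_le_atTop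

end IntervalAverage

section Density

/-- The indicator function of a set of natural numbers, as a bounded function on `ℤ`. -/
noncomputable def intIndicator (A : Set ℕ) : ℤ →ᵇ ℝ :=
  .indicator ((↑) '' A) (isClopen_discrete _)

lemma intIndicator_nonneg (A : Set ℕ) : 0 ≤ intIndicator A := fun x =>
  Set.indicator_nonneg (fun _ _ => zero_le_one) x

lemma intIndicator_apply (A : Set ℕ) (x : ℤ) [Decidable (x ∈ ((↑) '' A : Set ℤ))] :
    intIndicator A x = if x ∈ ((↑) '' A : Set ℤ) then 1 else 0 := by
  simp [intIndicator, Set.indicator_apply]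

lemma ncard_inter_Ioc_div_le_intervalAverage (A : Set ℕ) (m N : ℕ) :
    (N : ℝ)⁻¹ * (A ∩ Set.Ioc m (m + N)).ncard ≤ intervalAverage (m + 1) N (intIndicator A) := by
  classical
  have h_subset : A ∩ Set.Ioc m (m + N) ⊆
      ({i ∈ Finset.range N | m + 1 + i ∈ A}.image (m + 1 + ·) : Finset ℕ) := by
    rintro n ⟨hnA, hmn, hnN⟩
    obtain ⟨i, rfl⟩ := Nat.exists_eq_add_of_le hmn
    have hi : i < N := by simp only [Nat.succ_eq_add_one] at hnN; lia
    simpa using ⟨hi, hnA⟩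
  have h_card : (A ∩ Set.Ioc m (m + N)).ncard ≤ {i ∈ Finset.range N | m + 1 + i ∈ A}.card := by
    simpa using (Set.ncard_le_ncard h_subset).trans_eq (Set.ncard_coe_finset _)
      |>.trans Finset.card_image_le
  have h_sum : ∑ i ∈ Finset.range N, intIndicator A (m + 1 + i) =
      {i ∈ Finset.range N | m + 1 + i ∈ A}.card := by
    rw [← Finset.sum_boole]
    refine Finset.sum_congr rfl fun i _ => ?_
    have h_cast : (m + 1 + i : ℤ) = (m + 1 + i : ℕ) := by push_cast; rfl
    simp only [intIndicator_apply, h_cast, Set.mem_image, Nat.cast_inj, exists_eq_right]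
  rw [intervalAverage_apply, h_sum]
  gcongr

namespace PosUpperBanachDensity

variable {A : Set ℕ}

lemma nonempty (hA : PosUpperBanachDensity A) : A.Nonempty := by
  obtain ⟨δ, hδ, hA⟩ := hA
  obtain ⟨m, hm⟩ := hA 1 one_pos
  have h_card : (A ∩ Set.Ioc m (m + 1)).ncard ≠ 0 := fun h => by
    rw [h] at hm
    norm_num at hm
    linarith
  exact (Set.nonempty_of_ncard_ne_zero h_card).mono Set.inter_subset_left

theorem exists_isInvariantMean (hA : PosUpperBanachDensity A) :
    ∃ L : (ℤ →ᵇ ℝ) →ₚ[ℝ] ℝ, IsInvariantMean L ∧ 0 < L (intIndicator A) := by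
  obtain ⟨δ, hδ, hA⟩ := hA
  choose! m hm using hA
  obtain ⟨L, hL, hL_lim⟩ := exists_isInvariantMean_tendsto_intervalAverage fun N => m N + 1
  refine ⟨L, hL, hδ.trans_le (ge_of_tendsto (hL_lim _) ?_)⟩
  filter_upwards [Nat.hyperfilter_le_atTop (eventually_gt_atTop 0)] with N hN
  refine le_trans ?_ (ncard_inter_Ioc_div_le_intervalAverage A (m N) N)
  rw [le_inv_mul_iff₀ (by positivity), mul_comm]
  exact hm N hN

end PosUpperBanachDensity

lemma le_pow_mul_add_natCast {v : ℤ → ℝ} {K : ℝ} (hK : 0 ≤ K)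
    (hvK : ∀ k, v k ≤ K * v (k + 1)) (k : ℤ) (l : ℕ) : v k ≤ K ^ l * v (k + l) := by
  induction l with
  | zero => simp
  | succ l ih => calc
      v k ≤ K ^ l * v (k + l) := ih
      _ ≤ K ^ l * (K * v (k + l + 1)) := by gcongr; exact hvK _
      _ = K ^ (l + 1) * v (k + (l + 1 : ℕ)) := by push_cast; ring_nf

lemma summable_of_summable_indicator {v : ℤ → ℝ} (hv : ∀ k, 0 ≤ v k) {K : ℝ} (hK : 0 ≤ K)
    (hvK : ∀ k, v k ≤ K * v (k + 1)) {S : Set ℤ} {T : Finset ℤ}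
    (hT : ∀ d, ∃ t ∈ T, -t + d ∈ S) (hS : Summable (S.indicator v)) : Summable v := by
  obtain ⟨R, hR⟩ := T.bddAbove
  let g (t k : ℤ) : ℝ := K ^ (R - t).toNat * S.indicator v (k + (R - t))
  have hg_nonneg (t k : ℤ) : 0 ≤ g t k :=
    mul_nonneg (by positivity) (Set.indicator_nonneg (fun _ _ => hv _) _)
  have hg_summable (t : ℤ) : Summable (g t) :=
    ((Equiv.addRight (R - t)).summable_iff.2 hS).mul_left _
  have h_sum : Summable fun k => ∑ t ∈ T, g t k := summable_sum fun t _ => hg_summable t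
  refine h_sum.of_nonneg_of_le hv fun k => ?_
  obtain ⟨t, htT, htS⟩ := hT (k + R)
  have h_mem : k + (R - t) ∈ S := by convert htS using 1; ring
  calc v k ≤ K ^ (R - t).toNat * v (k + (R - t).toNat) := le_pow_mul_add_natCast hK hvK _ _
    _ = g t k := by
      rw [Int.toNat_of_nonneg (sub_nonneg.2 (hR htT)), ← Set.indicator_of_mem h_mem v]
    _ ≤ ∑ t ∈ T, g t k := Finset.single_le_sum (fun t _ => hg_nonneg t k) htT

theorem PosUpperBanachDensity.summable_of_sum_differences_le {A : Set ℕ}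
    (hA : PosUpperBanachDensity A) {v : ℤ → ℝ} (hv : ∀ k, 0 ≤ v k) {K : ℝ} (hK : 0 ≤ K)
    (hvK : ∀ k, v k ≤ K * v (k + 1)) {M : ℝ}
    (hM : ∀ n ∈ A, ∀ F : Finset ℤ, (∀ d ∈ F, ∃ m ∈ A, (m : ℤ) = n + d) →
      ∑ d ∈ F, v d ≤ M) : Summable v := by
  classical
  obtain ⟨L, hL, hL_pos⟩ := hA.exists_isInvariantMean
  have hM_nonneg : 0 ≤ M := by
    obtain ⟨n, hn⟩ := hA.nonempty
    simpa using hM n hn ∅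
  have hM_indicator (x : ℤ) (F : Finset ℤ) :
      intIndicator A x * ∑ d ∈ F, v d * intIndicator A (x + d) ≤ M := by
    simp only [intIndicator_apply, mul_ite, mul_one, mul_zero, ite_mul, one_mul, zero_mul,
      ← Finset.sum_filter]
    split_ifs with hx
    · obtain ⟨n, hn, rfl⟩ := hx
      exact hM n hn _ fun d hd => (Finset.mem_filter.1 hd).2
    · exact hM_nonneg
  obtain ⟨T, hT⟩ := hL.exists_finset_forall_le_correlation (half_lt_self (pow_pos hL_pos 2))
  exact summable_of_summable_indicator hv hK hvK hT
    (hL.summable_indicator_le_correlation (intIndicator_nonneg A) (by positivity) hv hM_indicator)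

end Density

section WeightedShift

variable {𝕜 : Type*}

/-- The bilateral weighted backward shift `B_w`, acting on all two-sided sequences. -/
def weightedShift [Mul 𝕜] (w z : ℤ → 𝕜) : ℤ → 𝕜 := fun k => w (k + 1) * z (k + 1)

/-- The solution of `W (k + 1) = w (k + 1) * W k` with `W 0 = 1`: multiplication by `W` conjugates
`B_w` to the unweighted shift. One of the two products is always empty. -/
noncomputable def cumulativeWeight [Field 𝕜] (w : ℤ → 𝕜) (k : ℤ) : 𝕜 :=
  (∏ ν ∈ Finset.Icc 1 k, w ν) / ∏ ν ∈ Finset.Icc (k + 1) 0, w ν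

section Algebra

variable [Field 𝕜] {w : ℤ → 𝕜}

lemma cumulativeWeight_ne_zero (hw : ∀ k, w k ≠ 0) (k : ℤ) : cumulativeWeight w k ≠ 0 :=
  div_ne_zero (Finset.prod_ne_zero_iff.2 fun _ _ => hw _)
    (Finset.prod_ne_zero_iff.2 fun _ _ => hw _)

lemma cumulativeWeight_of_nonneg (w : ℤ → 𝕜) {k : ℤ} (hk : 0 ≤ k) :
    cumulativeWeight w k = ∏ ν ∈ Finset.Icc 1 k, w ν := by
  rw [cumulativeWeight, Finset.Icc_eq_empty (a := k + 1) (by lia), Finset.prod_empty, div_one]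

lemma cumulativeWeight_of_nonpos (w : ℤ → 𝕜) {k : ℤ} (hk : k ≤ 0) :
    cumulativeWeight w k = (∏ ν ∈ Finset.Icc (k + 1) 0, w ν)⁻¹ := by
  rw [cumulativeWeight, Finset.Icc_eq_empty (b := k) (by lia), Finset.prod_empty, one_div]

lemma cumulativeWeight_add_one (hw : ∀ k, w k ≠ 0) (k : ℤ) :
    cumulativeWeight w (k + 1) = w (k + 1) * cumulativeWeight w k := by
  rcases le_or_gt 0 k with hk | hk
  · rw [cumulativeWeight_of_nonneg w hk, cumulativeWeight_of_nonneg w (by lia),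
      ← Finset.insert_Icc_right_eq_Icc_add_one (by lia), Finset.prod_insert (by simp)]
  · rw [cumulativeWeight_of_nonpos w hk.le, cumulativeWeight_of_nonpos w (by lia),
      ← Finset.insert_Icc_add_one_left_eq_Icc (a := k + 1) (by lia), Finset.prod_insert (by simp),
      mul_inv, mul_inv_cancel_left₀ (hw (k + 1))]

lemma cumulativeWeight_mul_iterate_weightedShift (hw : ∀ k, w k ≠ 0) (x : ℤ → 𝕜) (n : ℕ)
    (k : ℤ) : cumulativeWeight w k * (weightedShift w)^[n] x k =
      cumulativeWeight w (k + n) * x (k + n) := by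
  induction n generalizing k with
  | zero => simp
  | succ n ih =>
    rw [Function.iterate_succ_apply', weightedShift, mul_left_comm, ← mul_assoc,
      ← cumulativeWeight_add_one hw, ih, Nat.cast_succ, add_assoc, add_comm 1 (n : ℤ)]

lemma iterate_weightedShift_eq_of_add_eq (hw : ∀ k, w k ≠ 0) (x : ℤ → 𝕜) {m n : ℕ} {j k : ℤ}
    (h : k + n = j + m) : (weightedShift w)^[n] x k =
      cumulativeWeight w j / cumulativeWeight w k * (weightedShift w)^[m] x j := by
  rw [div_mul_eq_mul_div, eq_div_iff (cumulativeWeight_ne_zero hw k), mul_comm,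
    cumulativeWeight_mul_iterate_weightedShift hw, cumulativeWeight_mul_iterate_weightedShift hw, h]

lemma prod_Icc_zero_eq_mul_cumulativeWeight (w : ℤ → 𝕜) {k : ℤ} (hk : 0 ≤ k) :
    ∏ ν ∈ Finset.Icc 0 k, w ν = w 0 * cumulativeWeight w k := by
  rw [cumulativeWeight_of_nonneg w hk, ← Finset.insert_Icc_add_one_left_eq_Icc hk,
    Finset.prod_insert (by simp), zero_add]

end Algebra

section SeminormedAddCommGroup

variable {E : Type*} [SeminormedAddCommGroup E] {p : ℝ}

lemma norm_add_rpow_le (hp : 0 ≤ p) (a b : E) :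
    ‖a + b‖ ^ p ≤ 2 ^ p * (‖a‖ ^ p + ‖b‖ ^ p) := calc
  ‖a + b‖ ^ p ≤ (2 * max ‖a‖ ‖b‖) ^ p := by
    gcongr
    linarith [norm_add_le a b, le_max_left ‖a‖ ‖b‖, le_max_right ‖a‖ ‖b‖]
  _ = 2 ^ p * max ‖a‖ ‖b‖ ^ p := Real.mul_rpow zero_le_two (by positivity)
  _ ≤ 2 ^ p * (‖a‖ ^ p + ‖b‖ ^ p) := by
    gcongr
    rcases max_choice ‖a‖ ‖b‖ with h | h <;> rw [h]
    · exact le_add_of_nonneg_right (by positivity)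
    · exact le_add_of_nonneg_left (by positivity)

lemma summable_norm_sub_rpow {ι : Type*} (hp : 0 ≤ p) {a b : ι → E}
    (ha : Summable fun i => ‖a i‖ ^ p) (hb : Summable fun i => ‖b i‖ ^ p) :
    Summable fun i => ‖a i - b i‖ ^ p :=
  ((ha.add hb).mul_left (2 ^ p)).of_nonneg_of_le (fun i => by positivity) fun i => by
    simpa [sub_eq_add_neg] using norm_add_rpow_le hp (a i) (-b i)

lemma sum_norm_rpow_le_of_tsum_norm_sub_rpow_le {ι : Type*} (hp : 0 ≤ p) {a b : ι → E} {c : ℝ}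
    (hab : Summable fun i => ‖a i - b i‖ ^ p) (hb : Summable fun i => ‖b i‖ ^ p)
    (hc : ∑' i, ‖a i - b i‖ ^ p ≤ c) (F : Finset ι) :
    ∑ i ∈ F, ‖a i‖ ^ p ≤ 2 ^ p * (c + ∑' i, ‖b i‖ ^ p) := calc
  ∑ i ∈ F, ‖a i‖ ^ p ≤ ∑ i ∈ F, 2 ^ p * (‖a i - b i‖ ^ p + ‖b i‖ ^ p) :=
    Finset.sum_le_sum fun i _ => by simpa using norm_add_rpow_le hp (a i - b i) (b i)
  _ = 2 ^ p * (∑ i ∈ F, ‖a i - b i‖ ^ p + ∑ i ∈ F, ‖b i‖ ^ p) := by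
    rw [← Finset.mul_sum, Finset.sum_add_distrib]
  _ ≤ 2 ^ p * (c + ∑' i, ‖b i‖ ^ p) := by
    gcongr
    · exact (hab.sum_le_tsum F fun i _ => by positivity).trans hc
    · exact hb.sum_le_tsum F fun i _ => by positivity

lemma sub_le_norm_of_tsum_norm_sub_rpow_lt {ι : Type*} (hp : 0 < p) {a b : ι → E} {ε : ℝ}
    (hε : 0 ≤ ε) (hab : Summable fun i => ‖a i - b i‖ ^ p)
    (h : ∑' i, ‖a i - b i‖ ^ p < ε ^ p) (i : ι) : ‖b i‖ - ε ≤ ‖a i‖ := by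
  have h_rpow : ‖a i - b i‖ ^ p < ε ^ p := (hab.le_tsum i fun i _ => by positivity).trans_lt h
  have h_norm : ‖a i - b i‖ < ε := (Real.rpow_lt_rpow_iff (norm_nonneg _) hε hp).1 h_rpow
  linarith [norm_sub_rev (a i) (b i), norm_sub_norm_le (b i) (a i)]

end SeminormedAddCommGroup

section Norm

variable [NormedField 𝕜] {w : ℤ → 𝕜} {p C : ℝ} {x : ℤ → 𝕜} {ε : ℝ} {j : ℤ}

lemma summable_norm_iterate_weightedShift_rpow (hp : 0 ≤ p) (hC : ∀ k, ‖w k‖ ≤ C)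
    (hx : Summable fun k => ‖x k‖ ^ p) (n : ℕ) :
    Summable fun k => ‖(weightedShift w)^[n] x k‖ ^ p := by
  induction n with
  | zero => simpa using hx
  | succ n ih =>
    refine (((Equiv.addRight 1).summable_iff.2 ih).mul_left (C ^ p)).of_nonneg_of_le
      (fun k => by positivity) fun k => ?_
    rw [Function.iterate_succ_apply', weightedShift, norm_mul,
      Real.mul_rpow (norm_nonneg _) (norm_nonneg _)]
    exact mul_le_mul_of_nonneg_right (Real.rpow_le_rpow (norm_nonneg _) (hC _) hp) (by positivity)

lemma norm_inv_cumulativeWeight_le (hw : ∀ k, w k ≠ 0) (hC : ∀ k, ‖w k‖ ≤ C) (k : ℤ) :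
    ‖(cumulativeWeight w k)⁻¹‖ ≤ C * ‖(cumulativeWeight w (k + 1))⁻¹‖ := calc
  ‖(cumulativeWeight w k)⁻¹‖ = ‖w (k + 1)‖ * ‖(cumulativeWeight w (k + 1))⁻¹‖ := by
    rw [← norm_mul, cumulativeWeight_add_one hw, mul_inv, mul_inv_cancel_left₀ (hw _)]
  _ ≤ C * ‖(cumulativeWeight w (k + 1))⁻¹‖ := by
    gcongr
    exact hC _

lemma mul_norm_inv_cumulativeWeight_le_norm_iterate (hw : ∀ k, w k ≠ 0) {m n : ℕ} {k : ℤ}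
    (h : k + n = j + m) (hj : ε ≤ ‖(weightedShift w)^[m] x j‖) :
    ‖cumulativeWeight w j‖ * ε * ‖(cumulativeWeight w k)⁻¹‖ ≤ ‖(weightedShift w)^[n] x k‖ := by
  rw [iterate_weightedShift_eq_of_add_eq hw x h, div_eq_mul_inv, norm_mul, norm_mul, mul_right_comm]
  gcongr

theorem summable_norm_inv_cumulativeWeight_rpow {A : Set ℕ} (hA : PosUpperBanachDensity A)
    (hp : 0 ≤ p) (hw : ∀ k, w k ≠ 0) (hC : ∀ k, ‖w k‖ ≤ C) (hε : 0 < ε)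
    (hj : ∀ n ∈ A, ε ≤ ‖(weightedShift w)^[n] x j‖) {M : ℝ}
    (hM : ∀ n ∈ A, ∀ F : Finset ℤ, ∑ k ∈ F, ‖(weightedShift w)^[n] x k‖ ^ p ≤ M) :
    Summable fun k => ‖(cumulativeWeight w k)⁻¹‖ ^ p := by
  have hC_nonneg : 0 ≤ C := (norm_nonneg _).trans (hC 0)
  let a := ‖cumulativeWeight w j‖ * ε
  have ha : 0 < a := mul_pos (norm_pos_iff.2 (cumulativeWeight_ne_zero hw j)) hε
  let v (d : ℤ) : ℝ := a ^ p * ‖(cumulativeWeight w (d + j))⁻¹‖ ^ p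
  have hv_step (d : ℤ) : v d ≤ C ^ p * v (d + 1) := by
    simp only [v]
    rw [mul_left_comm, ← Real.mul_rpow hC_nonneg (norm_nonneg _), add_right_comm]
    exact mul_le_mul_of_nonneg_left (Real.rpow_le_rpow (norm_nonneg _)
      (norm_inv_cumulativeWeight_le hw hC (d + j)) hp) (by positivity)
  have hv_sum (n : ℕ) (hn : n ∈ A) (F : Finset ℤ)
      (hF : ∀ d ∈ F, ∃ m ∈ A, (m : ℤ) = n + d) : ∑ d ∈ F, v d ≤ M := calc
    ∑ d ∈ F, v d ≤ ∑ d ∈ F, ‖(weightedShift w)^[n] x (d + j)‖ ^ p :=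
      Finset.sum_le_sum fun d hd => by
        obtain ⟨m, hmA, hm⟩ := hF d hd
        simp only [v]
        rw [← Real.mul_rpow ha.le (norm_nonneg _)]
        gcongr
        exact mul_norm_inv_cumulativeWeight_le_norm_iterate hw (by lia) (hj m hmA)
    _ = ∑ k ∈ F.map (addRightEmbedding j), ‖(weightedShift w)^[n] x k‖ ^ p := by simp
    _ ≤ M := hM n hn _
  have hv : Summable v := hA.summable_of_sum_differences_le (fun d => by positivity)
    (Real.rpow_nonneg hC_nonneg p) hv_step hv_sum
  exact (Equiv.addRight j).summable_iff.1
    ((summable_mul_left_iff (Real.rpow_pos_of_pos ha p).ne').1 hv)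

end Norm

end WeightedShift

theorem stmt14_general {𝕜 : Type*} [NormedField 𝕜] {p : ℝ} (hp : 0 < p) {w : ℤ → 𝕜}
    (hw : ∀ k, w k ≠ 0) {C : ℝ} (hC : ∀ k, ‖w k‖ ≤ C) {x y : ℤ → 𝕜}
    (hx : Summable fun k => ‖x k‖ ^ p) (hy : Summable fun k => ‖y k‖ ^ p)
    {ε : ℝ} {j : ℤ} (hε : 0 ≤ ε) (hεy : ε < ‖y j‖)
    (hA : PosUpperBanachDensity {n : ℕ | ∑' k, ‖(weightedShift w)^[n] x k - y k‖ ^ p < ε ^ p}) :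
    Summable (fun n : ℕ => 1 / ‖∏ ν ∈ Finset.Icc (0 : ℤ) ((n : ℤ) + 1), w ν‖ ^ p) ∧
    Summable (fun n : ℕ => ‖∏ ν ∈ Finset.Icc (-(n : ℤ) - 1) 0, w ν‖ ^ p) := by
  have h_sub (n : ℕ) : Summable fun k => ‖(weightedShift w)^[n] x k - y k‖ ^ p :=
    summable_norm_sub_rpow hp.le (summable_norm_iterate_weightedShift_rpow hp.le hC hx n) hy
  have hW : Summable fun k => ‖(cumulativeWeight w k)⁻¹‖ ^ p :=
    summable_norm_inv_cumulativeWeight_rpow hA hp.le hw hC (sub_pos.2 hεy)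
      (fun n hn => sub_le_norm_of_tsum_norm_sub_rpow_lt hp hε (h_sub n) hn j)
      fun n hn => sum_norm_rpow_le_of_tsum_norm_sub_rpow_le hp.le (h_sub n) hy hn.le
  constructor
  · have h_inj : Function.Injective fun n : ℕ => (n : ℤ) + 1 := fun _ _ h => by simpa using h
    refine ((hW.comp_injective h_inj).mul_left (‖w 0‖⁻¹ ^ p)).congr fun n => ?_
    rw [prod_Icc_zero_eq_mul_cumulativeWeight w (by lia), one_div,
      ← Real.inv_rpow (norm_nonneg _), norm_mul, mul_inv, Function.comp_apply, norm_inv,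
      Real.mul_rpow (by positivity) (by positivity)]
  · have h_inj : Function.Injective fun n : ℕ => -(n : ℤ) - 2 := fun _ _ h => by simpa using h
    refine (hW.comp_injective h_inj).congr fun n => ?_
    rw [Function.comp_apply, cumulativeWeight_of_nonpos w (by lia), inv_inv,
      show -(n : ℤ) - 2 + 1 = -n - 1 by ring]

theorem stmt14 (p : ℝ) (hp : 1 ≤ p) (w : ℤ → ℝ) (hw0 : ∀ k, w k ≠ 0)
    (C : ℝ) (hbd : ∀ k, |w k| ≤ C)
    (Bw : (ℤ → ℝ) → (ℤ → ℝ)) (hBw : Bw = fun z k => w (k + 1) * z (k + 1))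
    (x y : ℤ → ℝ)
    (hx : Summable fun k => |x k| ^ p) (hy : Summable fun k => |y k| ^ p)
    (hy0 : y ≠ 0)
    (hbd' : ∀ ε : ℝ, 0 < ε →
      PosUpperBanachDensity {n : ℕ | ∑' k : ℤ, |Bw^[n] x k - y k| ^ p < ε ^ p}) :
    Summable (fun n : ℕ => 1 / |∏ ν ∈ Finset.Icc (0 : ℤ) ((n : ℤ) + 1), w ν| ^ p) ∧
    Summable (fun n : ℕ => |∏ ν ∈ Finset.Icc (-(n : ℤ) - 1) 0, w ν| ^ p) := by
  subst hBw
  obtain ⟨j, hj⟩ := Function.ne_iff.1 hy0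
  have hε : 0 < |y j| / 2 := half_pos (abs_pos.2 hj)
  simp only [← Real.norm_eq_abs] at *
  exact stmt14_general (zero_lt_one.trans_le hp) hw0 hbd hx hy hε.le
    (half_lt_self (norm_pos_iff.2 hj)) (hbd' _ hε)
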